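/- Let R be a WLL DCTRS over a signature F and s, t ∈ T(F,V). If s reduces to t in n steps at level m of the level-stratified reduction relation of R (s →^n_{(m),R} t), then s →*_{T(R)} t. -/

import Mathlib

set_option autoImplicit false

/-- First-order terms over a signature `F` and variables `V`. -/
inductive Term (F : Type) (V : Type) : Type where
  | var : V → Term F V
  | app : F → List (Term F V) → Term F V

namespace Term

variable {F V G W : Type}

/-- Application of a substitution. -/
def subst (σ : V → Term F W) : Term F V → Term F W
  | .var x => σ x
  | .app f ts => .app f (ts.attach.map (fun ⟨t, _⟩ => subst σ t))

/-- Renaming of variables. -/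
def rename (g : V → W) (t : Term F V) : Term F W := t.subst (fun x => .var (g x))

/-- Mapping of function symbols. -/
def mapF (g : F → G) : Term F V → Term G V
  | .var x => .var x
  | .app f ts => .app (g f) (ts.attach.map (fun ⟨t, _⟩ => mapF g t))

/-- Number of occurrences of the variable `x` in a term. -/
def count [DecidableEq V] (x : V) : Term F V → ℕ
  | .var y => if y = x then 1 else 0
  | .app _ ts => (ts.attach.map (fun ⟨t, _⟩ => count x t)).sum

/-- The list of variables occurring in a term (with repetitions). -/
def varList : Term F V → List V
  | .var x => [x]
  | .app _ ts => ts.attach.flatMap (fun ⟨t, _⟩ => varList t)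

/-- A term is linear if every variable occurs at most once in it. -/
def Linear [DecidableEq V] (t : Term F V) : Prop := ∀ x : V, t.count x ≤ 1

/-- Well-formedness of a term with respect to an arity assignment. -/
inductive WF (ar : F → ℕ) : Term F V → Prop where
  | var (x : V) : WF ar (.var x)
  | app (f : F) (ts : List (Term F V)) :
      ts.length = ar f → (∀ t ∈ ts, WF ar t) → WF ar (.app f ts)

end Term

/-- Number of occurrences of `x` in a sequence of terms. -/
def seqCount {F V : Type} [DecidableEq V] (x : V) (ts : List (Term F V)) : ℕ :=
  (ts.map (Term.count x)).sum

/-- An oriented conditional rewrite rule `l → r ⇐ s1 ≈ t1, …, sk ≈ tk`. -/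
structure CRule (F V : Type) : Type where
  lhs : Term F V
  rhs : Term F V
  conds : List (Term F V × Term F V)

/-- A conditional term rewriting system: a set of conditional rules. -/
abbrev CTRS (F V : Type) := Set (CRule F V)

namespace CRule

variable {F V W : Type}

/-- The sequence `l, t1, …, tk` of "pattern" terms of a rule. -/
def pats (ρ : CRule F V) : List (Term F V) := ρ.lhs :: ρ.conds.map Prod.snd

/-- The sequence `r, s1, …, sk` of "source" terms of a rule. -/
def srcs (ρ : CRule F V) : List (Term F V) := ρ.rhs :: ρ.conds.map Prod.fst

/-- Weak left-linearity: `|l,t1,…,tk|_x = 1` for every `x ∈ Var(r,s1,…,sk)`. -/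
def WLL [DecidableEq V] (ρ : CRule F V) : Prop :=
  ∀ x : V, 0 < seqCount x ρ.srcs → seqCount x ρ.pats = 1

/-- Determinism: `Var(si) ⊆ Var(l, t1, …, t_{i−1})`. -/
def Det [DecidableEq V] (ρ : CRule F V) : Prop :=
  ∀ i : ℕ, ∀ h : i < ρ.conds.length, ∀ x : V,
    0 < Term.count x (ρ.conds.get ⟨i, h⟩).1 →
    0 < seqCount x (ρ.lhs :: (ρ.conds.take i).map Prod.snd)

/-- Type 3: `Var(r) ⊆ Var(l, s1, t1, …, sk, tk)`. -/
def Type3 [DecidableEq V] (ρ : CRule F V) : Prop :=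
  ∀ x : V, 0 < Term.count x ρ.rhs →
    0 < seqCount x (ρ.lhs :: ρ.conds.flatMap (fun c => [c.1, c.2]))

/-- The left-hand side is a non-variable term. -/
def LhsNonVar (ρ : CRule F V) : Prop := ∀ x : V, ρ.lhs ≠ .var x

/-- Renaming the variables of a rule. -/
def mapV (g : V → W) (ρ : CRule F V) : CRule F W :=
  ⟨ρ.lhs.rename g, ρ.rhs.rename g, ρ.conds.map (fun c => (c.1.rename g, c.2.rename g))⟩

end CRule

/-- `R` is a deterministic CTRS (of Type 3, left-hand sides non-variable). -/
def IsDCTRS {F V : Type} [DecidableEq V] (R : CTRS F V) : Prop :=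
  ∀ ρ ∈ R, ρ.Det ∧ ρ.Type3 ∧ ρ.LhsNonVar

/-- All rules of `R` are weakly left-linear. -/
def IsWLL {F V : Type} [DecidableEq V] (R : CTRS F V) : Prop := ∀ ρ ∈ R, ρ.WLL

/-- Closure of a relation under contexts (rewriting below the root). -/
inductive CtxStep {F V : Type} (root : Term F V → Term F V → Prop) :
    Term F V → Term F V → Prop where
  | root {s t : Term F V} : root s t → CtxStep root s t
  | congr {f : F} {pre post : List (Term F V)} {s t : Term F V} :
      CtxStep root s t →
      CtxStep root (.app f (pre ++ s :: post)) (.app f (pre ++ t :: post))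

/-- A root rewrite step using a rule of `R`, conditions evaluated with `prev`. -/
def RootStep {F V : Type} (R : CTRS F V) (prev : Term F V → Term F V → Prop)
    (s t : Term F V) : Prop :=
  ∃ ρ ∈ R, ∃ σ : V → Term F V,
    s = ρ.lhs.subst σ ∧ t = ρ.rhs.subst σ ∧
    ∀ c ∈ ρ.conds, Relation.ReflTransGen prev (c.1.subst σ) (c.2.subst σ)

/-- The level-stratified reduction relation `→_{(n),R}`. -/
def LevelStep {F V : Type} (R : CTRS F V) : ℕ → Term F V → Term F V → Prop
  | 0 => fun _ _ => False
  | n + 1 => CtxStep (RootStep R (LevelStep R n))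

/-- The reduction relation `→_R = ⋃_{n} →_{(n),R}`. -/
def Red {F V : Type} (R : CTRS F V) (s t : Term F V) : Prop :=
  ∃ n : ℕ, LevelStep R n s t

/-- Many-step reduction `→*_R`. -/
def RedStar {F V : Type} (R : CTRS F V) : Term F V → Term F V → Prop :=
  Relation.ReflTransGen (Red R)

/-- `n`-fold composition of a relation. -/
def NFold {α : Type} (r : α → α → Prop) : ℕ → α → α → Prop
  | 0 => fun a b => a = b
  | n + 1 => fun a c => ∃ b, r a b ∧ NFold r n b c

/-- One-hole contexts. -/
inductive Ctx (F V : Type) : Type where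
  | hole : Ctx F V
  | app : F → List (Term F V) → Ctx F V → List (Term F V) → Ctx F V

/-- Filling the hole of a context with a term. -/
def Ctx.fill {F V : Type} : Ctx F V → Term F V → Term F V
  | .hole, t => t
  | .app f pre C post, t => .app f (pre ++ C.fill t :: post)
/-- Embedding of a rule over `F` into the signature `F ⊕ ℕ` extended with the
fresh tuple constructors `tuple_j` (encoded as `Sum.inr j`). -/
def CRule.liftT {F V : Type} (ρ : CRule F V) : CRule (F ⊕ ℕ) V :=
  ⟨ρ.lhs.mapF Sum.inl, ρ.rhs.mapF Sum.inl,
   ρ.conds.map (fun c => (c.1.mapF Sum.inl, c.2.mapF Sum.inl))⟩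

/-- The variable `x` occurs somewhere in the rule `ρ`. -/
def OccursInRule {F V : Type} [DecidableEq V] (ρ : CRule F V) (x : V) : Prop :=
  0 < seqCount x (ρ.lhs :: ρ.rhs :: ρ.conds.flatMap (fun c => [c.1, c.2]))

/-- `ρ'` is a result of applying the transformation `𝕋` to the rule `ρ`:
unconditional rules are kept (embedded into the extended signature); for a
conditional rule, every occurrence of a variable occurring more than once in
`l, t1, …, tk` is replaced by a distinct fresh variable (yielding `l'` and
`t'_1, …, t'_k`), and the condition
`tuple_j(x1,…,xj) ≈ tuple_j(x1σ,…,xjσ)` is appended, where `x1, …, xj` are the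
introduced fresh variables and `σ` is the renaming mapping them back to the
original variables. -/
def IsTRule {F V : Type} [DecidableEq V] (ρ : CRule F V) (ρ' : CRule (F ⊕ ℕ) V) : Prop :=
  (ρ.conds = [] ∧ ρ' = ρ.liftT) ∨
  (ρ.conds ≠ [] ∧
    ∃ (xs : List V) (σ : V → V) (l' : Term (F ⊕ ℕ) V) (ts' : List (Term (F ⊕ ℕ) V)),
      xs.Nodup ∧
      (∀ x ∈ xs, ¬ OccursInRule ρ x) ∧
      (∀ x : V, x ∉ xs → σ x = x) ∧
      ts'.length = ρ.conds.length ∧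
      l'.rename σ = ρ.lhs.mapF Sum.inl ∧
      (∀ (i : ℕ) (h : i < ρ.conds.length) (h' : i < ts'.length),
        (ts'.get ⟨i, h'⟩).rename σ = ((ρ.conds.get ⟨i, h⟩).2).mapF Sum.inl) ∧
      (∀ x ∈ xs, seqCount x (l' :: ts') = 1) ∧
      (∀ x : V, x ∉ xs →
        seqCount x (l' :: ts') =
          if seqCount x ρ.liftT.pats ≤ 1 then seqCount x ρ.liftT.pats else 0) ∧
      ρ' = ⟨l', ρ.rhs.mapF Sum.inl,
            (List.zip (ρ.conds.map (fun c => c.1.mapF Sum.inl)) ts') ++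
              [(.app (Sum.inr xs.length) (xs.map Term.var),
                .app (Sum.inr xs.length) (xs.map (fun x => Term.var (σ x))))]⟩)

/-- `R'` is a result of applying the transformation `𝕋` to the CTRS `R`,
i.e., `R' = { 𝕋(ρ) : ρ ∈ R }`. -/
def IsT {F V : Type} [DecidableEq V] (R : CTRS F V) (R' : CTRS (F ⊕ ℕ) V) : Prop :=
  (∀ ρ ∈ R, ∃ ρ' ∈ R', IsTRule ρ ρ') ∧ (∀ ρ' ∈ R', ∃ ρ ∈ R, IsTRule ρ ρ')

/-!
Write `σ` for the renaming that sends each fresh variable of `𝕋(ρ)` back to the variable it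
replaced and fixes all others. Applying `σ` to `𝕋(ρ)` gives back `ρ`, except that both sides of the
appended tuple condition become `tuple_j(x₁σ, …, x_jσ)`. So `ρ` is an instance of `𝕋(ρ)` up to a
trivial condition, and a step with `ρ` under `τ` is a step with `𝕋(ρ)` under `x ↦ (xσ)τ`, at the
same level.
-/

theorem seqCount_pos_iff {F V : Type} [DecidableEq V] {x : V} {ts : List (Term F V)} :
    0 < seqCount x ts ↔ ∃ t ∈ ts, 0 < t.count x := by
  simp [seqCount, List.sum_pos_iff_exists_pos_nat]

namespace Term

variable {F G V W U : Type}

@[elab_as_elim, induction_eliminator]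
theorem induction {P : Term F V → Prop} (var : ∀ x, P (.var x))
    (app : ∀ f ts, (∀ t ∈ ts, P t) → P (.app f ts)) : ∀ t, P t
  | .var x => var x
  | .app f ts => app f ts fun t _ => induction var app t

theorem subst_var (σ : V → Term F W) (x : V) : (Term.var x).subst σ = σ x := by
  simp only [subst]

theorem subst_app (σ : V → Term F W) (f : F) (ts : List (Term F V)) :
    (Term.app f ts).subst σ = .app f (ts.map (subst σ)) := by
  simp [subst]

theorem mapF_var (g : F → G) (x : V) : (Term.var x).mapF g = .var x := by
  simp only [mapF]

theorem mapF_app (g : F → G) (f : F) (ts : List (Term F V)) :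
    (Term.app f ts).mapF g = .app (g f) (ts.map (mapF g)) := by
  simp [mapF]

theorem subst_subst (σ : V → Term F W) (τ : W → Term F U) (t : Term F V) :
    (t.subst σ).subst τ = t.subst fun x => (σ x).subst τ := by
  induction t with
  | var x => simp only [subst_var]
  | app f ts ih => simpa [subst_app] using ih

theorem subst_var_eq_self (t : Term F V) : t.subst .var = t := by
  induction t with
  | var x => exact subst_var _ _
  | app f ts ih =>
    rw [subst_app]
    exact congrArg _ ((List.map_congr_left ih).trans (List.map_id ts))

theorem mapF_subst (g : F → G) (σ : V → Term F W) (t : Term F V) :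
    (t.subst σ).mapF g = (t.mapF g).subst fun x => (σ x).mapF g := by
  induction t with
  | var x => simp only [mapF_var, subst_var]
  | app f ts ih => simpa [subst_app, mapF_app] using ih

theorem rename_var (g : V → W) (x : V) : (Term.var x : Term F V).rename g = .var (g x) :=
  subst_var _ _

theorem rename_app (g : V → W) (f : F) (ts : List (Term F V)) :
    (Term.app f ts).rename g = .app f (ts.map (rename g)) :=
  subst_app _ _ _

section Count

variable [DecidableEq V]

theorem count_var_pos_iff {x y : V} : 0 < (Term.var y : Term F V).count x ↔ y = x := by
  by_cases h : y = x <;> simp [count, h]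

theorem count_app (x : V) (f : F) (ts : List (Term F V)) :
    (Term.app f ts).count x = seqCount x ts := by
  simp [count, seqCount]

theorem count_app_pos_iff {x : V} {f : F} {ts : List (Term F V)} :
    0 < (Term.app f ts).count x ↔ ∃ t ∈ ts, 0 < t.count x := by
  rw [count_app, seqCount_pos_iff]

theorem count_mapF (g : F → G) (x : V) (t : Term F V) : (t.mapF g).count x = t.count x := by
  induction t with
  | var y => simp only [mapF_var, count]
  | app f ts ih =>
    rw [mapF_app, count_app, count_app, seqCount, seqCount, List.map_map]
    exact congrArg List.sum (List.map_congr_left ih)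

theorem count_rename_pos [DecidableEq W] (g : V → W) {x : V} {t : Term F V}
    (h : 0 < t.count x) : 0 < (t.rename g).count (g x) := by
  induction t with
  | var y => rw [rename_var, count_var_pos_iff, count_var_pos_iff.1 h]
  | app f ts ih =>
    obtain ⟨t, ht, hx⟩ := count_app_pos_iff.1 h
    rw [rename_app, count_app_pos_iff]
    exact ⟨t.rename g, List.mem_map_of_mem ht, ih t ht hx⟩

theorem rename_eq_self {g : V → V} {t : Term F V} (h : ∀ x, 0 < t.count x → g x = x) :
    t.rename g = t := by
  induction t with
  | var y => rw [rename_var, h y (count_var_pos_iff.2 rfl)]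
  | app f ts ih =>
    rw [rename_app]
    refine congrArg _ ((List.map_congr_left fun t ht => ?_).trans (List.map_id ts))
    exact ih t ht fun x hx => h x (count_app_pos_iff.2 ⟨t, ht, hx⟩)

end Count

end Term

section SeqCount

variable {F G V W : Type} [DecidableEq V]

theorem seqCount_map_mapF (g : F → G) (x : V) (ts : List (Term F V)) :
    seqCount x (ts.map (Term.mapF g)) = seqCount x ts := by
  simp [seqCount, Function.comp_def, Term.count_mapF]

theorem seqCount_map_rename_pos [DecidableEq W] (g : V → W) {x : V} {ts : List (Term F V)}
    (h : 0 < seqCount x ts) : 0 < seqCount (g x) (ts.map (Term.rename g)) := by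
  obtain ⟨t, ht, hx⟩ := seqCount_pos_iff.1 h
  exact seqCount_pos_iff.2 ⟨t.rename g, List.mem_map_of_mem ht, Term.count_rename_pos g hx⟩

end SeqCount

section OccursInRule

variable {F V : Type} [DecidableEq V] {ρ : CRule F V} {x : V}

theorem occursInRule_of_mem_srcs {t : Term F V} (ht : t ∈ ρ.srcs) (hx : 0 < t.count x) :
    OccursInRule ρ x := by
  rw [CRule.srcs, List.mem_cons, List.mem_map] at ht
  refine seqCount_pos_iff.2 ⟨t, ?_, hx⟩
  rcases ht with rfl | ⟨c, hc, rfl⟩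
  · simp
  · simp only [List.mem_cons, List.mem_flatMap]
    exact .inr (.inr ⟨c, hc, .inl rfl⟩)

theorem occursInRule_of_seqCount_pats_pos (h : 0 < seqCount x ρ.pats) : OccursInRule ρ x := by
  obtain ⟨t, ht, hx⟩ := seqCount_pos_iff.1 h
  rw [CRule.pats, List.mem_cons, List.mem_map] at ht
  refine seqCount_pos_iff.2 ⟨t, ?_, hx⟩
  rcases ht with rfl | ⟨c, hc, rfl⟩
  · simp
  · simp only [List.mem_cons, List.mem_flatMap, List.not_mem_nil, or_false]
    exact .inr (.inr ⟨c, hc, .inr rfl⟩)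

end OccursInRule

section Simulation

variable {F G V : Type}

theorem CtxStep.mono {r r' : Term F V → Term F V → Prop} (hr : ∀ s t, r s t → r' s t)
    {s t : Term F V} (h : CtxStep r s t) : CtxStep r' s t := by
  induction h with
  | root h => exact .root (hr _ _ h)
  | congr _ ih => exact .congr ih

theorem CtxStep.mapF {r : Term F V → Term F V → Prop} {r' : Term G V → Term G V → Prop}
    (g : F → G) (hr : ∀ s t, r s t → r' (s.mapF g) (t.mapF g)) {s t : Term F V}
    (h : CtxStep r s t) : CtxStep r' (s.mapF g) (t.mapF g) := by
  induction h with
  | root h => exact .root (hr _ _ h)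
  | congr _ ih =>
    simp only [Term.mapF_app, List.map_append, List.map_cons]
    exact .congr ih

/-- Mapping of function symbols in a rule. For `g = Sum.inl` this is the embedding `CRule.liftT`. -/
def CRule.mapF (g : F → G) (ρ : CRule F V) : CRule G V :=
  ⟨ρ.lhs.mapF g, ρ.rhs.mapF g, ρ.conds.map (Prod.map (Term.mapF g) (Term.mapF g))⟩

theorem RootStep.mapF (g : F → G) {R : CTRS F V} {prev : Term F V → Term F V → Prop}
    {prev' : Term G V → Term G V → Prop}
    (hprev : ∀ s t, prev s t → prev' (s.mapF g) (t.mapF g)) {s t : Term F V}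
    (h : RootStep R prev s t) : RootStep (CRule.mapF g '' R) prev' (s.mapF g) (t.mapF g) := by
  obtain ⟨ρ, hρ, τ, rfl, rfl, hconds⟩ := h
  refine ⟨ρ.mapF g, Set.mem_image_of_mem _ hρ, fun x => (τ x).mapF g,
    Term.mapF_subst g τ _, Term.mapF_subst g τ _, ?_⟩
  intro c' hc'
  obtain ⟨c, hc, rfl⟩ := List.mem_map.1 hc'
  simp only [Prod.map, ← Term.mapF_subst]
  exact (hconds c hc).lift _ hprev

theorem LevelStep.mapF (g : F → G) {R : CTRS F V} {m : ℕ} {s t : Term F V}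
    (h : LevelStep R m s t) : LevelStep (CRule.mapF g '' R) m (s.mapF g) (t.mapF g) := by
  induction m generalizing s t with
  | zero => exact h
  | succ m ih => exact CtxStep.mapF g (fun _ _ => RootStep.mapF g fun _ _ => ih) h

/-- `ρ'` subsumes `ρ` if `ρ` is an instance of `ρ'` up to conditions: every condition of `ρ'`
becomes either a condition of `ρ` or a trivial one, with equal sides. A step with `ρ` is then also a
step with `ρ'`. -/
def CRule.Subsumes (ρ' ρ : CRule F V) : Prop :=
  ∃ σ : V → Term F V, ρ'.lhs.subst σ = ρ.lhs ∧ ρ'.rhs.subst σ = ρ.rhs ∧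
    ∀ c ∈ ρ'.conds, (c.1.subst σ, c.2.subst σ) ∈ ρ.conds ∨ c.1.subst σ = c.2.subst σ

theorem CRule.Subsumes.refl (ρ : CRule F V) : ρ.Subsumes ρ :=
  ⟨.var, Term.subst_var_eq_self _, Term.subst_var_eq_self _, fun c hc => .inl <| by
    rwa [Term.subst_var_eq_self, Term.subst_var_eq_self]⟩

theorem RootStep.of_subsumes {R R' : CTRS F V} (hR : ∀ ρ ∈ R, ∃ ρ' ∈ R', ρ'.Subsumes ρ)
    {prev prev' : Term F V → Term F V → Prop} (hprev : ∀ s t, prev s t → prev' s t)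
    {s t : Term F V} (h : RootStep R prev s t) : RootStep R' prev' s t := by
  obtain ⟨ρ, hρ, τ, rfl, rfl, hconds⟩ := h
  obtain ⟨ρ', hρ', σ, hl, hr, hc'⟩ := hR ρ hρ
  refine ⟨ρ', hρ', fun x => (σ x).subst τ, ?_, ?_, fun c hc => ?_⟩
  · rw [← hl, Term.subst_subst]
  · rw [← hr, Term.subst_subst]
  · rw [← Term.subst_subst, ← Term.subst_subst]
    rcases hc' c hc with hmem | heq
    · exact Relation.ReflTransGen.mono hprev _ _ (hconds _ hmem)
    · rw [heq]

theorem LevelStep.of_subsumes {R R' : CTRS F V} (hR : ∀ ρ ∈ R, ∃ ρ' ∈ R', ρ'.Subsumes ρ)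
    {m : ℕ} {s t : Term F V} (h : LevelStep R m s t) : LevelStep R' m s t := by
  induction m generalizing s t with
  | zero => exact h
  | succ m ih => exact CtxStep.mono (fun _ _ => RootStep.of_subsumes hR fun _ _ => ih) h

end Simulation

section NFold

variable {α β : Type} {r : α → α → Prop} {n : ℕ} {a b : α}

theorem NFold.lift {p : β → β → Prop} (f : α → β) (hf : ∀ a b, r a b → p (f a) (f b))
    (h : NFold r n a b) : NFold p n (f a) (f b) := by
  induction n generalizing a with
  | zero => exact congrArg f h
  | succ n ih =>
    obtain ⟨c, hac, hcb⟩ := h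
    exact ⟨f c, hf a c hac, ih hcb⟩

theorem NFold.reflTransGen (h : NFold r n a b) : Relation.ReflTransGen r a b := by
  induction n generalizing a with
  | zero => rw [show a = b from h]
  | succ n ih =>
    obtain ⟨c, hac, hcb⟩ := h
    exact .head hac (ih hcb)

end NFold

section Transformation

variable {F V : Type} [DecidableEq V]

theorem rename_mapF_of_mem_srcs {G : Type} (g : F → G) {ρ : CRule F V} {σ : V → V}
    (hσ : ∀ x, OccursInRule ρ x → σ x = x) {t : Term F V} (ht : t ∈ ρ.srcs) :
    (t.mapF g).rename σ = t.mapF g := by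
  refine Term.rename_eq_self fun x hx => hσ x ?_
  rw [Term.count_mapF] at hx
  exact occursInRule_of_mem_srcs ht hx

theorem zip_conds_map_rename {G : Type} (g : F → G) {ρ : CRule F V} {σ : V → V}
    (hσ : ∀ x, OccursInRule ρ x → σ x = x) {ts' : List (Term G V)}
    (hts' : ts'.map (Term.rename σ) = ρ.conds.map fun c => c.2.mapF g) :
    ((ρ.conds.map fun c => c.1.mapF g).zip ts').map (Prod.map (Term.rename σ) (Term.rename σ)) =
      (ρ.mapF g).conds := by
  have hsrcs : (ρ.conds.map fun c => c.1.mapF g).map (Term.rename σ) =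
      ρ.conds.map fun c => c.1.mapF g := by
    rw [List.map_map]
    exact List.map_congr_left fun c hc =>
      rename_mapF_of_mem_srcs g hσ (List.mem_cons_of_mem _ (List.mem_map_of_mem hc))
  rw [← List.zip_map, hsrcs, hts', List.zip_map']
  rfl

theorem IsTRule.subsumes {ρ : CRule F V} {ρ' : CRule (F ⊕ ℕ) V} (h : IsTRule ρ ρ') :
    ρ'.Subsumes (ρ.mapF Sum.inl) := by
  rcases h with ⟨-, rfl⟩ |
    ⟨-, xs, σ, l', ts', -, hfresh, hfix, hlen, hl', hts', honce, -, rfl⟩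
  · exact CRule.Subsumes.refl _
  have hσ (x : V) (hx : OccursInRule ρ x) : σ x = x := hfix x fun hmem => hfresh x hmem hx
  have hts'_map : ts'.map (Term.rename σ) = ρ.conds.map fun c => c.2.mapF Sum.inl :=
    List.ext_getElem (by simpa using hlen) fun i _ _ => by
      simpa using hts' i (by simp_all) (by simp_all)
  have hpats : (l' :: ts').map (Term.rename σ) = ρ.pats.map (Term.mapF Sum.inl) := by
    simp [CRule.pats, hl', hts'_map]
  have hidem : ∀ x ∈ xs, σ (σ x) = σ x := fun x hx => hσ _ <| by
    have hpos := seqCount_map_rename_pos σ (honce x hx ▸ Nat.one_pos)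
    rw [hpats, seqCount_map_mapF] at hpos
    exact occursInRule_of_seqCount_pats_pos hpos
  refine ⟨fun x => .var (σ x), hl', rename_mapF_of_mem_srcs _ hσ List.mem_cons_self, ?_⟩
  intro c hc
  rcases List.mem_append.1 hc with hzip | htuple
  · left
    rw [← zip_conds_map_rename Sum.inl hσ hts'_map]
    exact List.mem_map_of_mem hzip
  · right
    rw [List.mem_singleton.1 htuple, Term.subst_app, Term.subst_app, List.map_map, List.map_map]
    congr 1
    refine List.map_congr_left fun x hx => ?_
    simp only [Function.comp_apply, Term.subst_var, hidem x hx]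

end Transformation

theorem T_simulates_R_general {F V : Type} [DecidableEq V] {R : CTRS F V} {R' : CTRS (F ⊕ ℕ) V}
    (hT : ∀ ρ ∈ R, ∃ ρ' ∈ R', IsTRule ρ ρ') {s t : Term F V} {m n : ℕ}
    (h : NFold (LevelStep R m) n s t) :
    NFold (LevelStep R' m) n (s.mapF Sum.inl) (t.mapF Sum.inl) := by
  have hsub : ∀ ρ ∈ CRule.mapF Sum.inl '' R, ∃ ρ' ∈ R', ρ'.Subsumes ρ := by
    rintro _ ⟨ρ, hρ, rfl⟩
    obtain ⟨ρ', hρ', hρρ'⟩ := hT ρ hρ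
    exact ⟨ρ', hρ', hρρ'.subsumes⟩
  exact h.lift (Term.mapF Sum.inl) fun _ _ hst => (hst.mapF Sum.inl).of_subsumes hsub

/-- **Claim (i) of Theorem `𝕋`-equivalence.**
Let `R` be a WLL DCTRS over `F` and `s, t ∈ T(F,V)`. If `s →^n_{(m),R} t`
(n steps at level m of the stratified reduction of `R`), then `s →*_{𝕋(R)} t`. -/
theorem T_simulates_R {F V : Type} [DecidableEq V]
    (R : CTRS F V) (R' : CTRS (F ⊕ ℕ) V)
    (hD : IsDCTRS R) (hW : IsWLL R) (hT : IsT R R')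
    (s t : Term F V) (m n : ℕ)
    (h : NFold (LevelStep R m) n s t) :
    RedStar R' (s.mapF Sum.inl) (t.mapF Sum.inl) := by
  have hstar := (T_simulates_R_general hT.1 h).reflTransGen
  exact Relation.ReflTransGen.mono (fun _ _ hst => ⟨m, hst⟩) _ _ hstar
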